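/- Let A ∈ ℝ^{m×n}, y ∈ ℝ^m, let x* ∈ ℝⁿ be k-sparse and set η = y − Ax*. Let q ≥ 2k be a positive integer, set t = ⌈q/k⌉, and let δ₁ ≤ δ₂ ≤ δ₃ be restricted isometry constants of orders k, 2k, 3k for A. Suppose δ₃ < α*, where α* is the unique root in (0,1) of the equation (t+1)²α³ + (t+1)²α² + (2/(3+√5))α − 2/(3+√5) = 0. Let (x^p) be a PGOT sequence for (A, y, k, q). Then ρ := ((√5+1)/2)(t+1)δ₃√((1+δ₁)/(1−δ₂)) < 1 and for every p ≥ 0: ‖x^{p+1} − x*‖₂ ≤ ρ^p‖x^0 − x*‖₂ + (τ/(1−ρ))‖η‖₂, where τ = [(√5+1)(t+1)(1+δ₂) + 4]/(2√(1−δ₂)). -/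

import Mathlib

/-!
The contraction `‖x^{p+1} - x*‖ ≤ ρ ‖x^p - x*‖ + τ ‖η‖` is proved for each step and then iterated.

Write `g = Aᵀ(y - A x^p)`, `d = x* - x^p`, and let `T` be a set of exactly `k` indices containing the
support of `x*`.  The indicator of `T` is feasible in the problem that defines `w^p`, so
`‖y - A x^{p+1}‖ ≤ ‖y - A (u^p ⊗ 1_T)‖`; by the restricted isometry property this bounds
`√(1 - δ₂) ‖x^{p+1} - x*‖` by `√(1 + δ₁) ‖(x* - u^p)_T‖ + 2 ‖η‖`.

On `T ∩ Ω` the vector `x* - u^p` equals the residual `d - g`, while on `T \ Ω` it equals `d`.  Since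
`q ≥ 2k`, the set `Ω` contains, outside the supports of `x^p` and `x*`, at least as many indices as
`T \ Ω` has elements, and `|g|` is larger there.  Hence `g` on `T \ Ω` is dominated by `g` on a set
`W ⊆ Ω` of the same cardinality on which `d` vanishes (`threshold_bound`), so that
`‖(x* - u^p)_T‖² ≤ 2 ‖(d - g)_{T ∪ W}‖²`.  As `d - g = d - AᵀA d - Aᵀη`, polarization of the
restricted isometry inequality gives `‖(d - g)_{T ∪ W}‖ ≤ δ₃ ‖d‖ + √(1 + δ₂) ‖η‖`
(`residual_bound`).  The resulting constant `√2` is below `(√5 + 1)/2 · (t + 1)` for every `t`.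

That `ρ < 1` follows from the defining equation of `α`, because `δ²(1 + δ)` increases and `1 - δ`
decreases in `δ`.
-/

open Matrix Finset Filter

/-- Euclidean (ℓ₂) norm of a vector. -/
noncomputable def nrm {n : ℕ} (x : Fin n → ℝ) : ℝ := Real.sqrt (∑ i, x i ^ 2)

/-- A vector is `s`-sparse if it has at most `s` nonzero entries. -/
def sparse {n : ℕ} (s : ℕ) (x : Fin n → ℝ) : Prop :=
  ((Finset.univ : Finset (Fin n)).filter fun i => x i ≠ 0).card ≤ s

/-- Support of a vector, as a finset. -/
noncomputable def suppF {n : ℕ} (x : Fin n → ℝ) : Finset (Fin n) :=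
  (Finset.univ : Finset (Fin n)).filter fun i => x i ≠ 0

/-- Restriction of a vector to an index set (zero outside). -/
def restr {n : ℕ} (x : Fin n → ℝ) (Ω : Finset (Fin n)) : Fin n → ℝ :=
  fun i => if i ∈ Ω then x i else 0

/-- `δ ∈ [0,1)` is a restricted isometry constant of order `s` for `A`. -/
def RIC {m n : ℕ} (A : Matrix (Fin m) (Fin n) ℝ) (s : ℕ) (δ : ℝ) : Prop :=
  0 ≤ δ ∧ δ < 1 ∧ ∀ x : Fin n → ℝ, sparse s x →
    (1 - δ) * nrm x ^ 2 ≤ nrm (A.mulVec x) ^ 2 ∧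
      nrm (A.mulVec x) ^ 2 ≤ (1 + δ) * nrm x ^ 2

/-- `h` is a hard thresholding of `z` at level `q` with support `Ω`. -/
def IsHT {n : ℕ} (q : ℕ) (z h : Fin n → ℝ) (Ω : Finset (Fin n)) : Prop :=
  Ω.card = q ∧ (∀ i ∈ Ω, h i = z i) ∧ (∀ i ∉ Ω, h i = 0) ∧
    ∀ i ∈ Ω, ∀ j ∉ Ω, |z j| ≤ |z i|

/-- A PGOT iterate sequence for `(A, y, k, q)`. -/
def IsPGOTSeq {m n : ℕ} (A : Matrix (Fin m) (Fin n) ℝ) (y : Fin m → ℝ) (k q : ℕ)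
    (x : ℕ → Fin n → ℝ) : Prop :=
  x 0 = 0 ∧ ∀ p : ℕ, ∃ (h : Fin n → ℝ) (Ω : Finset (Fin n)) (w : Fin n → ℝ),
    IsHT q (Aᵀ.mulVec (y - A.mulVec (x p))) h Ω ∧
    (∀ i, w i = 0 ∨ w i = 1) ∧ (∑ i, w i) = (k : ℝ) ∧
    (∀ w' : Fin n → ℝ, (∀ i, w' i = 0 ∨ w' i = 1) → (∑ i, w' i) = (k : ℝ) →
      nrm (y - A.mulVec (fun i => (x p i + h i) * w i)) ^ 2 ≤
        nrm (y - A.mulVec (fun i => (x p i + h i) * w' i)) ^ 2) ∧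
    x (p + 1) = fun i => (x p i + h i) * w i

/-! ### The Euclidean norm and sparsity -/

lemma nrm_nonneg' {n : ℕ} (x : Fin n → ℝ) : 0 ≤ nrm x := Real.sqrt_nonneg _

lemma nrm_sq' {n : ℕ} (x : Fin n → ℝ) : nrm x ^ 2 = ∑ i, x i ^ 2 :=
  Real.sq_sqrt (Finset.sum_nonneg fun _ _ => sq_nonneg _)

lemma nrm_sq_dot {n : ℕ} (x : Fin n → ℝ) : nrm x ^ 2 = x ⬝ᵥ x := by
  rw [nrm_sq']; simp [dotProduct, pow_two]

lemma nrm_eq_norm {n : ℕ} (x : Fin n → ℝ) : nrm x = ‖WithLp.toLp 2 x‖ := by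
  simp [nrm, EuclideanSpace.norm_eq]

lemma nrm_add_le {n : ℕ} (x y : Fin n → ℝ) : nrm (x + y) ≤ nrm x + nrm y := by
  simp only [nrm_eq_norm, WithLp.toLp_add]; exact norm_add_le _ _

lemma nrm_neg' {n : ℕ} (x : Fin n → ℝ) : nrm (-x) = nrm x := by
  simp [nrm]

lemma dot_le_nrm {n : ℕ} (x y : Fin n → ℝ) : x ⬝ᵥ y ≤ nrm x * nrm y :=
  Real.sum_mul_le_sqrt_mul_sqrt _ _ _

lemma sparse_of_subset {n s : ℕ} {x : Fin n → ℝ} (V : Finset (Fin n)) (hV : V.card ≤ s)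
    (h : ∀ i ∉ V, x i = 0) : sparse s x := by
  refine (Finset.card_le_card fun i hi => ?_).trans hV
  by_contra hc
  exact (Finset.mem_filter.1 hi).2 (h i hc)

/-! ### Consequences of the restricted isometry property -/

/-- Polarization: the restricted isometry inequality controls the defect
`⟨u, v⟩ - ⟨A u, A v⟩` for vectors supported in a common small set. -/
lemma ric_polar {m n s : ℕ} {A : Matrix (Fin m) (Fin n) ℝ} {δ : ℝ} (hA : RIC A s δ)
    (V : Finset (Fin n)) (hV : V.card ≤ s) (u v : Fin n → ℝ)
    (hu : ∀ i ∉ V, u i = 0) (hv : ∀ i ∉ V, v i = 0) :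
    u ⬝ᵥ v - A.mulVec u ⬝ᵥ A.mulVec v ≤ δ * (nrm u * nrm v) := by
  obtain ⟨hδ, -, h⟩ := hA
  -- the two unknown lengths are balanced by rescaling `u` with `c = ‖v‖` and `v` with `e = ‖u‖`
  have key : ∀ c e : ℝ, 2 * (c * e * (u ⬝ᵥ v - A.mulVec u ⬝ᵥ A.mulVec v)) ≤
      δ * (c ^ 2 * nrm u ^ 2 + e ^ 2 * nrm v ^ 2) := by
    intro c e
    have hp := (h (c • u + e • v) (sparse_of_subset V hV fun i hi => by simp [hu i hi, hv i hi])).1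
    have hm := (h (c • u - e • v) (sparse_of_subset V hV fun i hi => by simp [hu i hi, hv i hi])).2
    simp only [nrm_sq_dot, mulVec_add, mulVec_sub, mulVec_smul, add_dotProduct, dotProduct_add,
      sub_dotProduct, dotProduct_sub, smul_dotProduct, dotProduct_smul, smul_eq_mul,
      dotProduct_comm v u, dotProduct_comm (A.mulVec v) (A.mulVec u)] at hp hm ⊢
    linarith
  rcases (nrm_nonneg' u).eq_or_lt with hu0 | hu0
  · have : u = 0 := by
      have := nrm_sq_dot u
      rw [← hu0] at this
      exact dotProduct_self_eq_zero.1 (by linarith)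
    simp [this, nrm]
  rcases (nrm_nonneg' v).eq_or_lt with hv0 | hv0
  · have : v = 0 := by
      have := nrm_sq_dot v
      rw [← hv0] at this
      exact dotProduct_self_eq_zero.1 (by linarith)
    simp [this, nrm]
  have hk := key (nrm v) (nrm u)
  have hpos : 0 < nrm u * nrm v := mul_pos hu0 hv0
  refine le_of_mul_le_mul_left ?_ hpos
  linarith

lemma nrm_mulVec_le {m n s : ℕ} {A : Matrix (Fin m) (Fin n) ℝ} {δ : ℝ} (hA : RIC A s δ)
    (v : Fin n → ℝ) (hv : sparse s v) : nrm (A.mulVec v) ≤ Real.sqrt (1 + δ) * nrm v := by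
  have h0 : 0 ≤ 1 + δ := by linarith [hA.1]
  refine abs_le_of_sq_le_sq' ?_ (mul_nonneg (Real.sqrt_nonneg _) (nrm_nonneg' _)) |>.2
  rw [mul_pow, Real.sq_sqrt h0]
  exact (hA.2.2 v hv).2

lemma le_nrm_mulVec {m n s : ℕ} {A : Matrix (Fin m) (Fin n) ℝ} {δ : ℝ} (hA : RIC A s δ)
    (v : Fin n → ℝ) (hv : sparse s v) : Real.sqrt (1 - δ) * nrm v ≤ nrm (A.mulVec v) := by
  have h0 : 0 ≤ 1 - δ := by linarith [hA.2.1]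
  refine abs_le_of_sq_le_sq' ?_ (nrm_nonneg' _) |>.2
  rw [mul_pow, Real.sq_sqrt h0]
  exact (hA.2.2 v hv).1

/-- The part on `V` of the gradient residual `d - Aᵀ(A d + η)` is small when `V` and the support
of `d` lie in a common set `U` of small cardinality. -/
lemma residual_bound {m n s s' : ℕ} {A : Matrix (Fin m) (Fin n) ℝ} {δ δ' : ℝ}
    (hA : RIC A s δ) (hA' : RIC A s' δ') (V U : Finset (Fin n)) (hVU : V ⊆ U)
    (hV : V.card ≤ s') (hU : U.card ≤ s) (d : Fin n → ℝ) (hd : ∀ i ∉ U, d i = 0)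
    (η : Fin m → ℝ) :
    nrm (restr (d - Aᵀ.mulVec (A.mulVec d + η)) V) ≤
      δ * nrm d + Real.sqrt (1 + δ') * nrm η := by
  set v := restr (d - Aᵀ.mulVec (A.mulVec d + η)) V with hvdef
  have hvV : ∀ i ∉ V, v i = 0 := fun i hi => by simp [hvdef, restr, hi]
  have e1 : nrm v ^ 2 = v ⬝ᵥ (d - Aᵀ.mulVec (A.mulVec d + η)) := by
    rw [nrm_sq_dot]
    refine Finset.sum_congr rfl fun i _ => ?_
    by_cases hi : i ∈ V <;> simp [hvdef, restr, hi]
  have e2 : v ⬝ᵥ (d - Aᵀ.mulVec (A.mulVec d + η)) =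
      (v ⬝ᵥ d - A.mulVec v ⬝ᵥ A.mulVec d) + A.mulVec v ⬝ᵥ (-η) := by
    rw [dotProduct_sub, dotProduct_mulVec, vecMul_transpose, dotProduct_add, dotProduct_neg]
    ring
  have b1 := ric_polar hA U hU v d (fun i hi => hvV i fun h => hi (hVU h)) hd
  have b2 := dot_le_nrm (A.mulVec v) (-η)
  rw [nrm_neg'] at b2
  have b3 := mul_le_mul_of_nonneg_right
    (nrm_mulVec_le hA' v (sparse_of_subset V hV hvV)) (nrm_nonneg' η)
  have hfin : nrm v * nrm v ≤ nrm v * (δ * nrm d + Real.sqrt (1 + δ') * nrm η) := by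
    nlinarith
  rcases (nrm_nonneg' v).eq_or_lt with h0 | h0
  · rw [← h0]
    exact add_nonneg (mul_nonneg hA.1 (nrm_nonneg' _))
      (mul_nonneg (Real.sqrt_nonneg _) (nrm_nonneg' _))
  · exact le_of_mul_le_mul_left hfin h0

/-! ### Hard thresholding -/

/-- If `f` on `s` is below `f` on `t` and `t` is at least as large as `s`, then some subset of `t`
with as many elements as `s` carries at least the sum of `f` over `s`. -/
lemma exists_dominating {ι : Type*} (s t : Finset ι) (f : ι → ℝ) (hc : s.card ≤ t.card)
    (hf : ∀ i ∈ s, ∀ j ∈ t, f i ≤ f j) :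
    ∃ W ⊆ t, W.card = s.card ∧ ∑ i ∈ s, f i ≤ ∑ i ∈ W, f i := by
  obtain ⟨W, hW, hcard⟩ := Finset.exists_subset_card_eq hc
  refine ⟨W, hW, hcard, ?_⟩
  rcases s.eq_empty_or_nonempty with rfl | hs
  · rw [Finset.card_empty, Finset.card_eq_zero] at hcard
    simp [hcard]
  have hpos : (0 : ℝ) < s.card := by exact_mod_cast hs.card_pos
  -- compare the double sums of `f i` and of `f j` over `s × W`
  have h : ∑ i ∈ s, ∑ _j ∈ W, f i ≤ ∑ _i ∈ s, ∑ j ∈ W, f j :=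
    Finset.sum_le_sum fun i hi => Finset.sum_le_sum fun j hj => hf i hi j (hW hj)
  simp only [Finset.sum_const, nsmul_eq_mul, hcard, ← Finset.mul_sum] at h
  exact le_of_mul_le_mul_left h hpos

/-- The error left on `T` after adding the thresholded gradient `h` to the iterate is controlled
by the residual `d - g` on a set only slightly larger than `T`. Here `X` stands for the
support of the iterate. -/
lemma threshold_bound {n k q : ℕ} (hq : 2 * k ≤ q) {g h d : Fin n → ℝ} {Ω : Finset (Fin n)}
    (hh : IsHT q g h Ω) (T X : Finset (Fin n)) (hT : T.card ≤ k) (hX : X.card ≤ k)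
    (hd : ∀ i ∉ T ∪ X, d i = 0) :
    ∃ W : Finset (Fin n), W.card ≤ k ∧
      nrm (restr (d - h) T) ^ 2 ≤ 2 * nrm (restr (d - g) (T ∪ W)) ^ 2 := by
  obtain ⟨hΩ, hin, hout, hmax⟩ := hh
  have hTX : (T ∪ X).card ≤ Ω.card := (Finset.card_union_le _ _).trans (by omega)
  have hc : (T \ Ω).card ≤ (Ω \ (T ∪ X)).card :=
    (Finset.card_le_card (Finset.sdiff_subset_sdiff Finset.subset_union_left le_rfl)).trans
      (Finset.card_sdiff_le_card_sdiff_iff.2 hTX)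
  obtain ⟨W, hW, hWc, hsum⟩ := exists_dominating (T \ Ω) (Ω \ (T ∪ X)) (fun i => g i ^ 2) hc
    fun i hi j hj => sq_le_sq.2
      (hmax j (Finset.mem_sdiff.1 hj).1 i (Finset.mem_sdiff.1 hi).2)
  refine ⟨W, hWc.le.trans ((Finset.card_le_card Finset.sdiff_subset).trans hT), ?_⟩
  have hsq : ∀ (z : Fin n → ℝ) (S : Finset (Fin n)), nrm (restr z S) ^ 2 = ∑ i ∈ S, z i ^ 2 := by
    intro z S
    simp [nrm_sq', restr, ite_pow]
  have hdisj : Disjoint T W := Finset.disjoint_left.2 fun i hi hiW =>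
    (Finset.mem_sdiff.1 (hW hiW)).2 (Finset.mem_union_left _ hi)
  rw [hsq, hsq, Finset.sum_union hdisj]
  have hWg : ∑ i ∈ W, (d - g) i ^ 2 = ∑ i ∈ W, g i ^ 2 := by
    refine Finset.sum_congr rfl fun i hi => ?_
    simp [hd i (Finset.mem_sdiff.1 (hW hi)).2]
  have h1 : ∑ i ∈ T ∩ Ω, (d - h) i ^ 2 ≤ 2 * ∑ i ∈ T ∩ Ω, (d - g) i ^ 2 := by
    rw [Finset.mul_sum]
    refine Finset.sum_le_sum fun i hi => ?_
    simp only [Pi.sub_apply, hin i (Finset.mem_inter.1 hi).2]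
    nlinarith [sq_nonneg (d i - g i)]
  have h2 : ∑ i ∈ T \ Ω, (d - h) i ^ 2 ≤
      2 * ∑ i ∈ T \ Ω, (d - g) i ^ 2 + 2 * ∑ i ∈ T \ Ω, g i ^ 2 := by
    rw [Finset.mul_sum, Finset.mul_sum, ← Finset.sum_add_distrib]
    refine Finset.sum_le_sum fun i hi => ?_
    simp only [Pi.sub_apply, hout i (Finset.mem_sdiff.1 hi).2]
    nlinarith [sq_nonneg (d i - 2 * g i)]
  have s1 := Finset.sum_inter_add_sum_sdiff T Ω fun i => (d - h) i ^ 2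
  have s2 := Finset.sum_inter_add_sum_sdiff T Ω fun i => (d - g) i ^ 2
  linarith

/-! ### The contraction rate -/

/-- Under the bound on the isometry constants by the root of the cubic, the rate is below one. -/
lemma rate_lt_one {t : ℕ} {δ₁ δ₂ δ₃ α : ℝ} (h1 : 0 ≤ δ₁) (h12 : δ₁ ≤ δ₂) (h23 : δ₂ ≤ δ₃)
    (hα1 : α < 1) (hδ : δ₃ < α)
    (hroot : ((t : ℝ) + 1) ^ 2 * α ^ 3 + ((t : ℝ) + 1) ^ 2 * α ^ 2 +
      2 / (3 + Real.sqrt 5) * α - 2 / (3 + Real.sqrt 5) = 0) :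
    (Real.sqrt 5 + 1) / 2 * ((t : ℝ) + 1) * δ₃ * Real.sqrt ((1 + δ₁) / (1 - δ₂)) < 1 := by
  have h5 : Real.sqrt 5 ^ 2 = 5 := Real.sq_sqrt (by norm_num)
  have h50 := Real.sqrt_nonneg 5
  set r := Real.sqrt 5
  have hr : (0 : ℝ) < 3 + r := by linarith
  have hroot' : (3 + r) / 2 * ((t : ℝ) + 1) ^ 2 * (α ^ 2 * (1 + α)) = 1 - α := by
    field_simp at hroot ⊢
    linarith
  have hd3 : 0 ≤ δ₃ := by linarith
  have hm : δ₃ ^ 2 * (1 + δ₁) ≤ α ^ 2 * (1 + α) := by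
    apply mul_le_mul (pow_le_pow_left₀ hd3 hδ.le 2) (by linarith) (by linarith) (sq_nonneg _)
  have hk : (3 + r) / 2 * ((t : ℝ) + 1) ^ 2 * (δ₃ ^ 2 * (1 + δ₁)) < 1 - δ₂ := by
    have := mul_le_mul_of_nonneg_left hm
      (by positivity : 0 ≤ (3 + r) / 2 * ((t : ℝ) + 1) ^ 2)
    linarith
  have h2 : 0 < 1 - δ₂ := by linarith
  refine lt_of_pow_lt_pow_left₀ 2 zero_le_one ?_
  have hq : ((r + 1) / 2) ^ 2 = (3 + r) / 2 := by nlinarith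
  rw [mul_pow, mul_pow, mul_pow, Real.sq_sqrt (div_nonneg (by linarith) h2.le), hq, one_pow,
    mul_div_assoc', div_lt_one h2]
  linarith

/-! ### One step of the iteration -/

/-- A `0/1` vector with sum `k` has exactly `k` nonzero entries. -/
lemma card_of_sum_eq {n k : ℕ} {w : Fin n → ℝ} (hw : ∀ i, w i = 0 ∨ w i = 1)
    (hs : ∑ i, w i = (k : ℝ)) : (Finset.univ.filter fun i => w i ≠ 0).card = k := by
  have : ∑ i, w i = ∑ i, if w i ≠ 0 then (1 : ℝ) else 0 :=
    Finset.sum_congr rfl fun i _ => by rcases hw i with h | h <;> simp [h]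
  rw [this, Finset.sum_boole] at hs
  exact_mod_cast hs

/-- One step of the iteration, with the constant `√2` in place of `(√5 + 1)/2 · (t + 1)`. -/
lemma pgot_step {m n k q : ℕ} (hq : 2 * k ≤ q) {A : Matrix (Fin m) (Fin n) ℝ}
    {y η : Fin m → ℝ} {xs x x' h w : Fin n → ℝ} {Ω : Finset (Fin n)} (hxs : sparse k xs)
    (hη : η = y - A.mulVec xs) {δ₁ δ₂ δ₃ : ℝ} (h1 : RIC A k δ₁) (h2 : RIC A (2 * k) δ₂)
    (h3 : RIC A (3 * k) δ₃) (hx : sparse k x)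
    (hh : IsHT q (Aᵀ.mulVec (y - A.mulVec x)) h Ω) (hx's : sparse k x')
    (hmin : ∀ w' : Fin n → ℝ, (∀ i, w' i = 0 ∨ w' i = 1) → (∑ i, w' i) = (k : ℝ) →
      nrm (y - A.mulVec (fun i => (x i + h i) * w i)) ^ 2 ≤
        nrm (y - A.mulVec (fun i => (x i + h i) * w' i)) ^ 2)
    (hx' : x' = fun i => (x i + h i) * w i) :
    Real.sqrt (1 - δ₂) * nrm (x' - xs) ≤ Real.sqrt (1 + δ₁) *
      (Real.sqrt 2 * (δ₃ * nrm (x - xs) + Real.sqrt (1 + δ₂) * nrm η)) + 2 * nrm η := by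
  have hkn : k ≤ (Finset.univ : Finset (Fin n)).card := by
    have := Finset.card_le_card (Finset.subset_univ Ω)
    rw [hh.1] at this
    omega
  obtain ⟨T, hST, -, hT⟩ := Finset.exists_subsuperset_card_eq (Finset.subset_univ _) hxs hkn
  have hxsT : ∀ i ∉ T, xs i = 0 := fun i hi => by
    by_contra hc
    exact hi (hST (by simpa using hc))
  set X := (Finset.univ : Finset (Fin n)).filter fun i => x i ≠ 0 with hXdef
  have hxX : ∀ i ∉ X, x i = 0 := fun i hi => by simpa [hXdef] using hi
  have hdz : ∀ i ∉ T ∪ X, (xs - x) i = 0 := fun i hi => by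
    rw [Finset.notMem_union] at hi
    simp [hxsT i hi.1, hxX i hi.2]
  obtain ⟨W, hW, hthr⟩ := threshold_bound hq hh T X hT.le hx hdz
  have hUc : (T ∪ W ∪ X).card ≤ 3 * k := by
    have a := Finset.card_union_le (T ∪ W) X
    have b := Finset.card_union_le T W
    have c : X.card ≤ k := hx
    omega
  have hg : y - A.mulVec x = A.mulVec (xs - x) + η := by
    rw [hη, mulVec_sub]; abel
  have hres := residual_bound h3 h2 (T ∪ W) (T ∪ W ∪ X) Finset.subset_union_left
    ((Finset.card_union_le _ _).trans (by omega)) hUc (xs - x)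
    (fun i hi => hdz i fun hc => hi (by
      rcases Finset.mem_union.1 hc with h | h <;> simp [h])) η
  rw [← hg] at hres
  have hnx : nrm (xs - x) = nrm (x - xs) := by rw [← nrm_neg', neg_sub]
  rw [hnx] at hres
  have hT2 : nrm (restr (xs - x - h) T) ≤
      Real.sqrt 2 * (δ₃ * nrm (x - xs) + Real.sqrt (1 + δ₂) * nrm η) := by
    refine le_trans ?_ (mul_le_mul_of_nonneg_left hres (Real.sqrt_nonneg _))
    refine (abs_le_of_sq_le_sq' ?_ (mul_nonneg (Real.sqrt_nonneg _) (nrm_nonneg' _))).2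
    rw [mul_pow, Real.sq_sqrt zero_le_two]
    exact hthr
  have hsp : sparse k (restr (xs - x - h) T) :=
    sparse_of_subset T hT.le fun i hi => by simp [restr, hi]
  have hAT := (nrm_mulVec_le h1 _ hsp).trans
    (mul_le_mul_of_nonneg_left hT2 (Real.sqrt_nonneg _))
  have hm := hmin (fun i => if i ∈ T then 1 else 0) (fun i => by by_cases hi : i ∈ T <;> simp [hi])
    (by simp [hT])
  rw [← hx'] at hm
  have hm' := (abs_le_of_sq_le_sq' hm (nrm_nonneg' _)).2
  have e1 : y - A.mulVec (fun i => (x i + h i) * (if i ∈ T then 1 else 0)) =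
      A.mulVec (restr (xs - x - h) T) + η := by
    have : (fun i => (x i + h i) * (if i ∈ T then (1 : ℝ) else 0)) =
        xs - restr (xs - x - h) T := by
      funext i
      by_cases hi : i ∈ T
      · simp [restr, hi]; ring
      · simp [restr, hi, hxsT i hi]
    rw [this, mulVec_sub, hη]; abel
  rw [e1] at hm'
  have hm2 := hm'.trans (nrm_add_le _ _)
  have e2 : A.mulVec (x' - xs) = -(y - A.mulVec x') + η := by
    rw [hη, mulVec_sub]; abel
  have hl : nrm (A.mulVec (x' - xs)) ≤ nrm (y - A.mulVec x') + nrm η := by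
    rw [e2]
    refine (nrm_add_le _ _).trans ?_
    rw [nrm_neg']
  have hx'2 : sparse (2 * k) (x' - xs) := by
    refine sparse_of_subset ((Finset.univ.filter fun i => x' i ≠ 0) ∪ T) ?_ ?_
    · have a : (Finset.univ.filter fun i => x' i ≠ 0).card ≤ k := hx's
      exact (Finset.card_union_le _ _).trans (by omega)
    · intro i hi
      rw [Finset.notMem_union] at hi
      have : x' i = 0 := by simpa using hi.1
      simp [this, hxsT i hi.2]
  have hlow := le_nrm_mulVec h2 _ hx'2
  linarith

/-! ### Iterating the contraction -/

theorem stmt4 {m n : ℕ} (k q : ℕ) (hk : 0 < k) (hq : 2 * k ≤ q)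
    (A : Matrix (Fin m) (Fin n) ℝ) (y : Fin m → ℝ)
    (xs : Fin n → ℝ) (hxs : sparse k xs) (η : Fin m → ℝ) (hη : η = y - A.mulVec xs)
    (t : ℕ) (ht : t = ⌈(q : ℝ) / (k : ℝ)⌉₊)
    (δ₁ δ₂ δ₃ : ℝ) (h1 : RIC A k δ₁) (h2 : RIC A (2 * k) δ₂) (h3 : RIC A (3 * k) δ₃)
    (h12 : δ₁ ≤ δ₂) (h23 : δ₂ ≤ δ₃)
    (α : ℝ) (hα : α ∈ Set.Ioo (0 : ℝ) 1)
    (hroot : ((t : ℝ) + 1) ^ 2 * α ^ 3 + ((t : ℝ) + 1) ^ 2 * α ^ 2 +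
      2 / (3 + Real.sqrt 5) * α - 2 / (3 + Real.sqrt 5) = 0)
    (huniq : ∀ β ∈ Set.Ioo (0 : ℝ) 1,
      ((t : ℝ) + 1) ^ 2 * β ^ 3 + ((t : ℝ) + 1) ^ 2 * β ^ 2 +
        2 / (3 + Real.sqrt 5) * β - 2 / (3 + Real.sqrt 5) = 0 → β = α)
    (hδ : δ₃ < α)
    (x : ℕ → Fin n → ℝ) (hx : IsPGOTSeq A y k q x)
    (ρ τ : ℝ)
    (hρ : ρ = (Real.sqrt 5 + 1) / 2 * ((t : ℝ) + 1) * δ₃ *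
      Real.sqrt ((1 + δ₁) / (1 - δ₂)))
    (hτ : τ = ((Real.sqrt 5 + 1) * ((t : ℝ) + 1) * (1 + δ₂) + 4) /
      (2 * Real.sqrt (1 - δ₂))) :
    ρ < 1 ∧ ∀ p : ℕ,
      nrm (x (p + 1) - xs) ≤ ρ ^ p * nrm (x 0 - xs) + τ / (1 - ρ) * nrm η := by
  have hρ1 : ρ < 1 := hρ ▸ rate_lt_one h1.1 h12 h23 hα.2 hδ hroot
  refine ⟨hρ1, ?_⟩
  have hsparse : ∀ p, sparse k (x p) := by
    intro p
    cases p with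
    | zero => simp [hx.1, sparse]
    | succ p =>
      obtain ⟨h, Ω, w, -, hw, hs, -, hxp⟩ := hx.2 p
      refine sparse_of_subset (Finset.univ.filter fun i => w i ≠ 0) (card_of_sum_eq hw hs).le ?_
      intro i hi
      have : w i = 0 := by simpa using hi
      simp [hxp, this]
  have hd2 : 0 < 1 - δ₂ := by linarith [h2.2.1]
  have hsq2 : 0 < Real.sqrt (1 - δ₂) := Real.sqrt_pos.2 hd2
  have hc0 : (0 : ℝ) ≤ (Real.sqrt 5 + 1) / 2 * ((t : ℝ) + 1) := by positivity
  have hc : Real.sqrt 2 ≤ (Real.sqrt 5 + 1) / 2 * ((t : ℝ) + 1) := by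
    have a : Real.sqrt 2 ≤ 3 / 2 := Real.sqrt_le_iff.2 (by norm_num)
    have b : (2 : ℝ) ≤ Real.sqrt 5 := Real.le_sqrt_of_sq_le (by norm_num)
    have c : (0 : ℝ) ≤ t := Nat.cast_nonneg t
    nlinarith
  have hρ0 : 0 ≤ ρ := by
    rw [hρ]
    exact mul_nonneg (mul_nonneg hc0 h3.1) (Real.sqrt_nonneg _)
  have hstep : ∀ p, nrm (x (p + 1) - xs) ≤ ρ * nrm (x p - xs) + τ * nrm η := by
    intro p
    obtain ⟨h, Ω, w, hh, -, -, hmin, hxp⟩ := hx.2 p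
    have hs := pgot_step hq hxs hη h1 h2 h3 (hsparse p) hh (hsparse (p + 1)) hmin hxp
    set c := (Real.sqrt 5 + 1) / 2 * ((t : ℝ) + 1) with hcdef
    have hN := nrm_nonneg' η
    have hE := nrm_nonneg' (x p - xs)
    have hroots : Real.sqrt (1 + δ₁) * Real.sqrt (1 + δ₂) ≤ 1 + δ₂ := by
      have a : Real.sqrt (1 + δ₁) ≤ Real.sqrt (1 + δ₂) := Real.sqrt_le_sqrt (by linarith)
      have b : Real.sqrt (1 + δ₂) * Real.sqrt (1 + δ₂) = 1 + δ₂ :=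
        Real.mul_self_sqrt (by linarith [h2.1])
      exact (mul_le_mul_of_nonneg_right a (Real.sqrt_nonneg _)).trans b.le
    have hτ' : τ * Real.sqrt (1 - δ₂) = c * (1 + δ₂) + 2 := by
      rw [hτ, hcdef]; field_simp; ring
    have hρ' : ρ * Real.sqrt (1 - δ₂) = c * δ₃ * Real.sqrt (1 + δ₁) := by
      rw [hρ, Real.sqrt_div (by linarith [h1.1])]; field_simp
    refine le_of_mul_le_mul_left (hs.trans ?_) hsq2
    have e : Real.sqrt (1 - δ₂) * (ρ * nrm (x p - xs) + τ * nrm η) =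
        c * δ₃ * Real.sqrt (1 + δ₁) * nrm (x p - xs) + (c * (1 + δ₂) + 2) * nrm η := by
      rw [← hρ', ← hτ']; ring
    rw [e]
    have hI : 0 ≤ δ₃ * nrm (x p - xs) + Real.sqrt (1 + δ₂) * nrm η :=
      add_nonneg (mul_nonneg h3.1 hE) (mul_nonneg (Real.sqrt_nonneg _) hN)
    have a1 := mul_le_mul_of_nonneg_left (mul_le_mul_of_nonneg_right hc hI)
      (Real.sqrt_nonneg (1 + δ₁))
    have a2 := mul_le_mul_of_nonneg_left (mul_le_mul_of_nonneg_right hroots hN) hc0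
    linarith
  have hτ0 : 0 ≤ τ := by
    rw [hτ]
    have := h2.1
    positivity
  have hN := nrm_nonneg' η
  have h1ρ : 0 < 1 - ρ := by linarith
  -- `τ / (1 - ρ) * ‖η‖` is the fixed point of `z ↦ ρ z + τ ‖η‖`
  have hfix : ρ * (τ / (1 - ρ) * nrm η) + τ * nrm η = τ / (1 - ρ) * nrm η := by
    field_simp; ring
  have hF : 0 ≤ τ / (1 - ρ) * nrm η := mul_nonneg (div_nonneg hτ0 h1ρ.le) hN
  have hiter : ∀ p, nrm (x p - xs) ≤ ρ ^ p * nrm (x 0 - xs) + τ / (1 - ρ) * nrm η := by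
    intro p
    induction p with
    | zero => simpa using hF
    | succ p ih =>
      have a := mul_le_mul_of_nonneg_left ih hρ0
      have b := hstep p
      rw [pow_succ]
      linarith
  intro p
  have h0 := nrm_nonneg' (x 0 - xs)
  have hpow : ρ ^ (p + 1) ≤ ρ ^ p := pow_le_pow_of_le_one hρ0 hρ1.le p.le_succ
  linarith [hiter (p + 1), mul_le_mul_of_nonneg_right hpow h0]
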